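/- Let Q ⊂ ℝ² be a square of area A > 0 and fix w_max > 0, ρ > 0. For each m ≥ 1 define the optimal light-load coverage cost of m differential-drive robots as T_opt^DD(m) = inf over all configurations g₁,…,g_m ∈ ℝ² × ℝ of (1/A)∫_Q min_{1≤i≤m} τ_DD(g_i, q) dq. Then liminf_{m→∞} m^{1/3} · T_opt^DD(m) ≥ (1/(5 w_max)) (6 ρ A / 5)^{1/3}. -/

import Mathlib

open MeasureTheory Filter Topology Real

noncomputable section

/-- The plane `ℝ²` with the Euclidean norm. -/
abbrev Plane : Type := EuclideanSpace ℝ (Fin 2)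

/-- A differential-drive (DD) trajectory with wheel-speed bound `wmax` and half-axle
length `ρ`: coordinates `x y θ` driven by measurable wheel-speed controls `wl, wr`
bounded by `wmax`, satisfying (in integral form) `x' = (wl+wr)/2 ⬝ cos θ`,
`y' = (wl+wr)/2 ⬝ sin θ`, `θ' = (wr - wl)/(2ρ)`. -/
def IsDDTraj (wmax ρ : ℝ) (x y θ : ℝ → ℝ) : Prop :=
  ∃ wl wr : ℝ → ℝ, Measurable wl ∧ Measurable wr ∧
    (∀ t, |wl t| ≤ wmax) ∧ (∀ t, |wr t| ≤ wmax) ∧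
    (∀ t, x t = x 0 + ∫ s in (0:ℝ)..t, (wl s + wr s) / 2 * Real.cos (θ s)) ∧
    (∀ t, y t = y 0 + ∫ s in (0:ℝ)..t, (wl s + wr s) / 2 * Real.sin (θ s)) ∧
    (∀ t, θ t = θ 0 + ∫ s in (0:ℝ)..t, (wr s - wl s) / (2 * ρ))

/-- Minimum travel time of a DD robot from configuration `(p, θ₀)` to the point `q`. -/
def tauDD (wmax ρ : ℝ) (p : Plane) (θ₀ : ℝ) (q : Plane) : ℝ :=
  sInf {T : ℝ | 0 ≤ T ∧ ∃ x y θ : ℝ → ℝ, IsDDTraj wmax ρ x y θ ∧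
    x 0 = p 0 ∧ y 0 = p 1 ∧ θ 0 = θ₀ ∧ x T = q 0 ∧ y T = q 1}

/-- Reachable set at time `t` of a DD robot starting at configuration `(p, θ₀)`. -/
def reachDD (wmax ρ : ℝ) (p : Plane) (θ₀ : ℝ) (t : ℝ) : Set Plane :=
  {q | tauDD wmax ρ p θ₀ q ≤ t}



/-- Trajectory generated by controls. -/
lemma dd_of_controls {w ρ : ℝ} (x0 y0 θ0 : ℝ) {wl wr : ℝ → ℝ} (h1 : Measurable wl)
    (h2 : Measurable wr) (h3 : ∀ t, |wl t| ≤ w) (h4 : ∀ t, |wr t| ≤ w) :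
    ∃ x y θ : ℝ → ℝ, IsDDTraj w ρ x y θ ∧ x 0 = x0 ∧ y 0 = y0 ∧ θ 0 = θ0 ∧
    (∀ t, θ t = θ0 + ∫ s in (0:ℝ)..t, (wr s - wl s) / (2 * ρ)) ∧
    (∀ t, x t = x0 + ∫ s in (0:ℝ)..t, (wl s + wr s) / 2 * Real.cos (θ s)) ∧
    (∀ t, y t = y0 + ∫ s in (0:ℝ)..t, (wl s + wr s) / 2 * Real.sin (θ s)) := by
  let θ : ℝ → ℝ := fun t => θ0 + ∫ s in (0:ℝ)..t, (wr s - wl s) / (2 * ρ)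
  refine ⟨fun t => x0 + ∫ s in (0:ℝ)..t, (wl s + wr s) / 2 * Real.cos (θ s),
    fun t => y0 + ∫ s in (0:ℝ)..t, (wl s + wr s) / 2 * Real.sin (θ s), θ,
    ⟨wl, wr, h1, h2, h3, h4, ?_, ?_, ?_⟩, ?_, ?_, ?_, ?_, ?_, ?_⟩ <;> simp [θ]

/-- Reachability between configurations in time `T`. -/
def DDReach (w ρ T x0 y0 θ0 x1 y1 θ1 : ℝ) : Prop :=
  0 ≤ T ∧ ∃ x y θ : ℝ → ℝ, IsDDTraj w ρ x y θ ∧ x 0 = x0 ∧ y 0 = y0 ∧ θ 0 = θ0 ∧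
    x T = x1 ∧ y T = y1 ∧ θ T = θ1

lemma dd_ii {f : ℝ → ℝ} (hf : Measurable f) {C : ℝ} (hC : ∀ t, |f t| ≤ C) (a b : ℝ) :
    IntervalIntegrable f volume a b := by
  refine (intervalIntegrable_const (c := C)).mono_fun hf.aestronglyMeasurable ?_
  refine Filter.Eventually.of_forall fun t => ?_
  simp only [Real.norm_eq_abs]
  exact (hC t).trans (le_abs_self C)

lemma dd_meas {ρ : ℝ} {wl wr θ : ℝ → ℝ} {w : ℝ} (h1 : Measurable wl)
    (h2 : Measurable wr) (h3 : ∀ t, |wl t| ≤ w) (h4 : ∀ t, |wr t| ≤ w)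
    (h : ∀ t, θ t = θ 0 + ∫ s in (0:ℝ)..t, (wr s - wl s) / (2 * ρ)) : Measurable θ := by
  have : θ = fun t => θ 0 + ∫ s in (0:ℝ)..t, (wr s - wl s) / (2 * ρ) := funext h
  rw [this]
  refine Continuous.measurable (continuous_const.add ?_)
  refine intervalIntegral.continuous_primitive (fun a b => ?_) 0
  refine dd_ii (by fun_prop) (C := (w + w) / |2 * ρ|) (fun t => ?_) a b
  rw [abs_div]
  gcongr
  exact (abs_sub _ _).trans (add_le_add (h4 t) (h3 t))

lemma dd_v {wl wr : ℝ → ℝ} {w : ℝ} (h3 : ∀ t, |wl t| ≤ w) (h4 : ∀ t, |wr t| ≤ w) (t c : ℝ)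
    (_ : |c| ≤ 1) : |(wl t + wr t) / 2 * c| ≤ w * |c| := by
  rw [abs_mul]
  gcongr
  have := abs_le.1 (h3 t); have := abs_le.1 (h4 t)
  rw [abs_le]; constructor <;> linarith

lemma dd_concat {f f1 f2 : ℝ → ℝ} {T S : ℝ} (hT : 0 ≤ T) (hS : 0 ≤ S)
    (hf : ∀ a b, IntervalIntegrable f volume a b)
    (h1 : ∀ s, s < T → f s = f1 s) (h2 : ∀ s, 0 ≤ s → f (s + T) = f2 s) :
    (∀ t, t ≤ T → ∫ s in (0:ℝ)..t, f s = ∫ s in (0:ℝ)..t, f1 s) ∧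
    ∫ s in (0:ℝ)..(S + T), f s = (∫ s in (0:ℝ)..T, f1 s) + ∫ s in (0:ℝ)..S, f2 s := by
  have key : ∀ t, t ≤ T → ∫ s in (0:ℝ)..t, f s = ∫ s in (0:ℝ)..t, f1 s := by
    intro t ht
    refine intervalIntegral.integral_congr_ae ?_
    have hne : ∀ᵐ s : ℝ, s ≠ T := by simp [ae_iff]
    filter_upwards [hne] with s hs hmem
    refine h1 s (lt_of_le_of_ne (hmem.2.trans (max_le hT ht)) hs)
  refine ⟨key, ?_⟩
  rw [← intervalIntegral.integral_add_adjacent_intervals (hf 0 T) (hf T (S + T)), key T le_rfl]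
  congr 1
  have := intervalIntegral.integral_comp_add_right (a := 0) (b := S) f T
  rw [zero_add] at this
  rw [← this]
  refine intervalIntegral.integral_congr fun s hs => ?_
  rw [Set.uIcc_of_le hS] at hs
  exact h2 s hs.1

lemma DDReach.trans {w ρ T S x0 y0 θ0 x1 y1 θ1 x2 y2 θ2 : ℝ}
    (h : DDReach w ρ T x0 y0 θ0 x1 y1 θ1) (h' : DDReach w ρ S x1 y1 θ1 x2 y2 θ2) :
    DDReach w ρ (S + T) x0 y0 θ0 x2 y2 θ2 := by
  obtain ⟨hT, x, y, θ, ⟨wl, wr, a1, a2, a3, a4, a5, a6, a7⟩, b1, b2, b3, b4, b5, b6⟩ := h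
  obtain ⟨hS, x', y', θ', ⟨wl', wr', c1, c2, c3, c4, c5, c6, c7⟩, d1, d2, d3, d4, d5, d6⟩ := h'
  let Wl : ℝ → ℝ := fun s => if s < T then wl s else wl' (s - T)
  let Wr : ℝ → ℝ := fun s => if s < T then wr s else wr' (s - T)
  have m1 : Measurable Wl := Measurable.ite measurableSet_Iio a1 (c1.comp (measurable_id.sub_const T))
  have m2 : Measurable Wr := Measurable.ite measurableSet_Iio a2 (c2.comp (measurable_id.sub_const T))
  have m3 : ∀ t, |Wl t| ≤ w := by
    intro t; simp only [Wl]; split_ifs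
    · exact a3 t
    · exact c3 _
  have m4 : ∀ t, |Wr t| ≤ w := by
    intro t; simp only [Wr]; split_ifs
    · exact a4 t
    · exact c4 _
  obtain ⟨X, Y, Θ, ht, e1, e2, e3, e4, e5, e6⟩ := dd_of_controls (ρ := ρ) x0 y0 θ0 m1 m2 m3 m4
  have l1 : ∀ s, s < T → Wl s = wl s := fun s hs => by simp [Wl, hs]
  have l2 : ∀ s, s < T → Wr s = wr s := fun s hs => by simp [Wr, hs]
  have r1 : ∀ s, 0 ≤ s → Wl (s + T) = wl' s := fun s hs => by simp [Wl, hs]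
  have r2 : ∀ s, 0 ≤ s → Wr (s + T) = wr' s := fun s hs => by simp [Wr, hs]
  have mΘ : Measurable Θ := dd_meas m1 m2 m3 m4 (by rw [e3]; exact e4)
  have iθ : ∀ a b, IntervalIntegrable (fun s => (Wr s - Wl s) / (2 * ρ)) volume a b := by
    refine dd_ii (by fun_prop) (C := (w + w) / |2 * ρ|) (fun t => ?_)
    rw [abs_div]
    gcongr
    exact (abs_sub _ _).trans (add_le_add (m4 t) (m3 t))
  have hw : 0 ≤ w := (abs_nonneg _).trans (m3 0)
  have ix : ∀ a b, IntervalIntegrable (fun s => (Wl s + Wr s) / 2 * Real.cos (Θ s)) volume a b := by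
    refine dd_ii (by fun_prop) (C := w) (fun t => ?_)
    exact (dd_v m3 m4 t _ (abs_cos_le_one _)).trans (mul_le_of_le_one_right hw (abs_cos_le_one _))
  have iy : ∀ a b, IntervalIntegrable (fun s => (Wl s + Wr s) / 2 * Real.sin (Θ s)) volume a b := by
    refine dd_ii (by fun_prop) (C := w) (fun t => ?_)
    exact (dd_v m3 m4 t _ (abs_sin_le_one _)).trans (mul_le_of_le_one_right hw (abs_sin_le_one _))
  have g1 : ∀ s, s ≤ T → Θ s = θ s := by
    intro s hs
    rw [e4, a7, b3]
    congr 1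
    exact (dd_concat hT hS iθ (f1 := fun s => (wr s - wl s) / (2 * ρ))
      (f2 := fun s => (wr' s - wl' s) / (2 * ρ)) (fun s hs => by simp only [l1 s hs, l2 s hs])
      (fun s hs => by simp only [r1 s hs, r2 s hs])).1 s hs
  have g2 : ∀ s, 0 ≤ s → Θ (s + T) = θ' s := by
    intro s hs
    rw [e4, c7, d3, ← b6, a7, b3, add_assoc]
    congr 1
    exact (dd_concat hT hs iθ (f1 := fun s => (wr s - wl s) / (2 * ρ))
      (f2 := fun s => (wr' s - wl' s) / (2 * ρ)) (fun s hs => by simp only [l1 s hs, l2 s hs])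
      (fun s hs => by simp only [r1 s hs, r2 s hs])).2
  refine ⟨by positivity, X, Y, Θ, ht, e1, e2, e3, ?_, ?_, (g2 S hS).trans d6⟩
  · rw [e5, ← d4, c5, d1, ← b4, a5, b1, add_assoc]
    congr 1
    exact (dd_concat hT hS ix (f1 := fun s => (wl s + wr s) / 2 * Real.cos (θ s))
      (f2 := fun s => (wl' s + wr' s) / 2 * Real.cos (θ' s))
      (fun s hs => by simp only [l1 s hs, l2 s hs, g1 s hs.le])
      (fun s hs => by simp only [r1 s hs, r2 s hs, g2 s hs])).2
  · rw [e6, ← d5, c6, d2, ← b5, a6, b2, add_assoc]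
    congr 1
    exact (dd_concat hT hS iy (f1 := fun s => (wl s + wr s) / 2 * Real.sin (θ s))
      (f2 := fun s => (wl' s + wr' s) / 2 * Real.sin (θ' s))
      (fun s hs => by simp only [l1 s hs, l2 s hs, g1 s hs.le])
      (fun s hs => by simp only [r1 s hs, r2 s hs, g2 s hs])).2

lemma dd_sgn (w α : ℝ) (hw : 0 < w) : ∃ c : ℝ, |c| ≤ w ∧ (|α| / w) * c = α := by
  rcases le_total 0 α with h | h
  · exact ⟨w, by rw [abs_of_pos hw], by rw [abs_of_nonneg h]; field_simp⟩
  · exact ⟨-w, by rw [abs_neg, abs_of_pos hw], by rw [abs_of_nonpos h]; field_simp⟩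

lemma dd_rotate {w ρ : ℝ} (hw : 0 < w) (hρ : 0 < ρ) (x0 y0 θ0 α : ℝ) :
    DDReach w ρ (ρ * (|α| / w)) x0 y0 θ0 x0 y0 (θ0 + α) := by
  obtain ⟨c, hc, hc'⟩ := dd_sgn w α hw
  obtain ⟨X, Y, Θ, ht, e1, e2, e3, e4, e5, e6⟩ := dd_of_controls (ρ := ρ) (w := w) x0 y0 θ0
    (wl := fun _ => -c) (wr := fun _ => c) measurable_const measurable_const
    (fun _ => by simpa using hc) (fun _ => hc)
  refine ⟨by positivity, X, Y, Θ, ht, e1, e2, e3, by rw [e5]; simp, by rw [e6]; simp, ?_⟩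
  rw [e4, intervalIntegral.integral_const]
  congr 1
  rw [smul_eq_mul]
  conv_rhs => rw [← hc']
  field_simp
  ring

lemma dd_drive {w ρ : ℝ} (hw : 0 < w) (x0 y0 θ0 d : ℝ) :
    DDReach w ρ (|d| / w) x0 y0 θ0 (x0 + d * cos θ0) (y0 + d * sin θ0) θ0 := by
  obtain ⟨c, hc, hc'⟩ := dd_sgn w d hw
  obtain ⟨X, Y, Θ, ht, e1, e2, e3, e4, e5, e6⟩ := dd_of_controls (ρ := ρ) (w := w) x0 y0 θ0
    (wl := fun _ => c) (wr := fun _ => c) measurable_const measurable_const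
    (fun _ => hc) (fun _ => hc)
  have hΘ : ∀ t, Θ t = θ0 := by intro t; rw [e4]; simp
  refine ⟨by positivity, X, Y, Θ, ht, e1, e2, e3, ?_, ?_, hΘ _⟩
  · rw [e5]; simp only [hΘ]; rw [intervalIntegral.integral_const, smul_eq_mul, sub_zero]
    conv_rhs => rw [← hc']
    ring
  · rw [e6]; simp only [hΘ]; rw [intervalIntegral.integral_const, smul_eq_mul, sub_zero]
    conv_rhs => rw [← hc']
    ring

/-- Upper bound for travel time in the body frame. -/
lemma dd_park {w ρ : ℝ} (hw : 0 < w) (hρ : 0 < ρ) (x0 y0 θ0 dx dy : ℝ) :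
    ∃ T θ1, DDReach w ρ T x0 y0 θ0 (x0 + dx * cos θ0 - dy * sin θ0)
      (y0 + dx * sin θ0 + dy * cos θ0) θ1 ∧
      T ≤ (|dx| + (2 + ρ) * √|dy| + |dy|) / w := by
  set s := √|dy| with hs
  have hs0 : 0 ≤ s := Real.sqrt_nonneg _
  have hs2 : s * s = |dy| := Real.mul_self_sqrt (abs_nonneg _)
  set u := dy / s with hu
  have hsu : s * u = dy := by
    rcases eq_or_ne s 0 with h | h
    · rw [h] at hs2 ⊢
      have : dy = 0 := by rw [← abs_eq_zero, ← hs2]; ring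
      rw [this]; ring
    · rw [hu]; field_simp
  have hua : |u| = s := by
    rw [hu, abs_div, abs_of_nonneg hs0, ← hs2]
    rcases eq_or_ne s 0 with h | h
    · simp [h]
    · field_simp
  have h1 := dd_drive (ρ := ρ) hw x0 y0 θ0 (dx - s)
  have h2 := dd_rotate hw hρ (x0 + (dx - s) * cos θ0) (y0 + (dx - s) * sin θ0) θ0 (arctan u)
  have h3 := dd_drive (ρ := ρ) hw (x0 + (dx - s) * cos θ0) (y0 + (dx - s) * sin θ0)
    (θ0 + arctan u) (s * √(1 + u ^ 2))
  have hp : 0 < √(1 + u ^ 2) := by positivity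
  have hc : √(1 + u ^ 2) * cos (arctan u) = 1 := by rw [Real.cos_arctan]; field_simp
  have hsn : √(1 + u ^ 2) * sin (arctan u) = u := by rw [Real.sin_arctan]; field_simp
  refine ⟨|s * √(1 + u ^ 2)| / w + (ρ * (|arctan u| / w) + |dx - s| / w), θ0 + arctan u, ?_, ?_⟩
  · convert (h1.trans h2).trans h3 using 1
    · rw [cos_add]
      linear_combination (sin θ0) * hsu + (s * sin θ0) * hsn - (s * cos θ0) * hc
    · rw [sin_add]
      linear_combination (-cos θ0) * hsu - (s * cos θ0) * hsn - (s * sin θ0) * hc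
  · have k1 : |dx - s| ≤ |dx| + s := by
      have := abs_sub dx s; rwa [abs_of_nonneg hs0] at this
    have k2 : |arctan u| ≤ s := by
      rw [← hua]
      have h4 : ∀ v : ℝ, 0 ≤ v → arctan v ≤ v := by
        intro v hv
        by_contra hlt
        push Not at hlt
        have := Real.lt_tan (x := arctan v) (by linarith) (Real.arctan_lt_pi_div_two v)
        rw [Real.tan_arctan] at this
        linarith
      rcases le_total 0 u with h | h
      · rw [abs_of_nonneg h, abs_of_nonneg (Real.arctan_nonneg.2 h)]; exact h4 u h
      · rw [abs_of_nonpos h, abs_of_nonpos (by simpa using Real.arctan_strictMono.monotone h), ← Real.arctan_neg]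
        exact h4 _ (by linarith)
    have k3 : |s * √(1 + u ^ 2)| ≤ s + |dy| := by
      rw [abs_mul, abs_of_nonneg hs0, abs_of_pos hp, ← hs2]
      have : √(1 + u ^ 2) ≤ 1 + s := by
        rw [← hua]
        apply Real.sqrt_le_iff.2
        refine ⟨by positivity, ?_⟩
        nlinarith [abs_nonneg u, sq_abs u]
      nlinarith
    have k4 := mul_le_mul_of_nonneg_left k2 hρ.le
    have : |s * √(1 + u ^ 2)| / w + (ρ * (|arctan u| / w) + |dx - s| / w)
      = (|s * √(1 + u ^ 2)| + ρ * |arctan u| + |dx - s|) / w := by field_simp; ring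
    rw [this]
    refine div_le_div_of_nonneg_right ?_ hw.le
    linarith

/-- The set of feasible times. -/
lemma tauDD_le {w ρ T θ0 θ1 : ℝ} {p q : Plane}
    (h : DDReach w ρ T (p 0) (p 1) θ0 (q 0) (q 1) θ1) : tauDD w ρ p θ0 q ≤ T := by
  obtain ⟨hT, x, y, θ, ht, b1, b2, b3, b4, b5, b6⟩ := h
  exact csInf_le ⟨0, fun T h => h.1⟩ ⟨hT, x, y, θ, ht, b1, b2, b3, b4, b5⟩

lemma tauDD_nonneg (w ρ θ0 : ℝ) (p q : Plane) : 0 ≤ tauDD w ρ p θ0 q :=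
  Real.sInf_nonneg fun _ h => h.1

/-- Travel time bound in world coordinates. -/
lemma dd_park' {w ρ : ℝ} (hw : 0 < w) (hρ : 0 < ρ) (x0 y0 θ0 x1 y1 : ℝ) :
    ∃ T θ1, DDReach w ρ T x0 y0 θ0 x1 y1 θ1 ∧
      T ≤ ((|x1 - x0| + |y1 - y0|) + (2 + ρ) * √(|x1 - x0| + |y1 - y0|)
        + (|x1 - x0| + |y1 - y0|)) / w := by
  obtain ⟨T, θ1, h, hT⟩ := dd_park hw hρ x0 y0 θ0 ((x1 - x0) * cos θ0 + (y1 - y0) * sin θ0)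
    (-(x1 - x0) * sin θ0 + (y1 - y0) * cos θ0)
  have hcs := sin_sq_add_cos_sq θ0
  refine ⟨T, θ1, ?_, hT.trans ?_⟩
  · convert h using 1
    · linear_combination (x0 - x1) * hcs
    · linear_combination (y0 - y1) * hcs
  · have k1 : |(x1 - x0) * cos θ0 + (y1 - y0) * sin θ0| ≤ |x1 - x0| + |y1 - y0| := by
      refine (abs_add_le _ _).trans ?_
      rw [abs_mul, abs_mul]
      exact add_le_add (mul_le_of_le_one_right (abs_nonneg _) (abs_cos_le_one _))
        (mul_le_of_le_one_right (abs_nonneg _) (abs_sin_le_one _))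
    have k2 : |-(x1 - x0) * sin θ0 + (y1 - y0) * cos θ0| ≤ |x1 - x0| + |y1 - y0| := by
      refine (abs_add_le _ _).trans ?_
      rw [abs_mul, abs_mul, abs_neg]
      exact add_le_add (mul_le_of_le_one_right (abs_nonneg _) (abs_sin_le_one _))
        (mul_le_of_le_one_right (abs_nonneg _) (abs_cos_le_one _))
    gcongr

lemma tauDD_exists {w ρ : ℝ} (hw : 0 < w) (hρ : 0 < ρ) (p : Plane) (θ0 : ℝ) (q : Plane)
    {t : ℝ} (ht : tauDD w ρ p θ0 q < t) :
    ∃ T θ1, T < t ∧ DDReach w ρ T (p 0) (p 1) θ0 (q 0) (q 1) θ1 := by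
  obtain ⟨T0, θ2, ⟨hT, x, y, θ, h, b1, b2, b3, b4, b5, b6⟩, -⟩ :=
    dd_park' hw hρ (p 0) (p 1) θ0 (q 0) (q 1)
  obtain ⟨T, ⟨hT, x, y, θ, h, b1, b2, b3, b4, b5⟩, hlt⟩ :=
    exists_lt_of_csInf_lt (Set.nonempty_of_mem (x := T0)
      (show T0 ∈ {T : ℝ | 0 ≤ T ∧ ∃ x y θ : ℝ → ℝ, IsDDTraj w ρ x y θ ∧
    x 0 = p 0 ∧ y 0 = p 1 ∧ θ 0 = θ0 ∧ x T = q 0 ∧ y T = q 1} from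
        ⟨hT, x, y, θ, h, b1, b2, b3, b4, b5⟩)) ht
  exact ⟨T, θ T, hlt, hT, x, y, θ, h, b1, b2, b3, b4, b5, rfl⟩

lemma tauDD_tri {w ρ : ℝ} (hw : 0 < w) (hρ : 0 < ρ) (p : Plane) (θ0 : ℝ) (q q' : Plane) :
    tauDD w ρ p θ0 q' ≤ tauDD w ρ p θ0 q +
      ((|q' 0 - q 0| + |q' 1 - q 1|) + (2 + ρ) * √(|q' 0 - q 0| + |q' 1 - q 1|)
        + (|q' 0 - q 0| + |q' 1 - q 1|)) / w := by
  refine le_of_forall_pos_lt_add fun ε hε => ?_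
  obtain ⟨T, θ1, hT, h⟩ := tauDD_exists hw hρ p θ0 q (lt_add_of_pos_right _ hε)
  obtain ⟨S, θ2, h', hS⟩ := dd_park' hw hρ (q 0) (q 1) θ1 (q' 0) (q' 1)
  have := tauDD_le (h.trans h')
  linarith

lemma tauDD_continuous {w ρ : ℝ} (hw : 0 < w) (hρ : 0 < ρ) (p : Plane) (θ0 : ℝ) :
    Continuous (tauDD w ρ p θ0) := by
  rw [continuous_iff_continuousAt]
  intro q
  let G : Plane → ℝ := fun q' => ((|q' 0 - q 0| + |q' 1 - q 1|) +
    (2 + ρ) * √(|q' 0 - q 0| + |q' 1 - q 1|) + (|q' 0 - q 0| + |q' 1 - q 1|)) / w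
  have hG : Continuous G := by fun_prop
  have hG0 : G q = 0 := by simp [G]
  have hG' := hG.tendsto q
  rw [hG0] at hG'
  rw [ContinuousAt, tendsto_iff_dist_tendsto_zero]
  refine squeeze_zero (fun _ => dist_nonneg) (fun q' => ?_) hG'
  have e1 := tauDD_tri hw hρ p θ0 q q'
  have e2 := tauDD_tri hw hρ p θ0 q' q
  rw [abs_sub_comm (q 0), abs_sub_comm (q 1)] at e2
  rw [Real.dist_eq, abs_le]
  constructor <;> simp only [G] <;> linarith

/-- Reachable points lie in a thin box. -/
lemma dd_box {w ρ T x0 y0 θ0 x1 y1 θ1 : ℝ} (hρ : 0 < ρ)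
    (h : DDReach w ρ T x0 y0 θ0 x1 y1 θ1) :
    |cos θ0 * (x1 - x0) + sin θ0 * (y1 - y0)| ≤ w * T ∧
    |-sin θ0 * (x1 - x0) + cos θ0 * (y1 - y0)| ≤ (w * T) ^ 2 / ρ := by
  obtain ⟨hT, x, y, θ, ⟨wl, wr, a1, a2, a3, a4, a5, a6, a7⟩, b1, b2, b3, b4, b5, b6⟩ := h
  have hw : 0 ≤ w := (abs_nonneg _).trans (a3 0)
  have mΘ : Measurable θ := dd_meas a1 a2 a3 a4 a7
  have ix : ∀ a b, IntervalIntegrable (fun s => (wl s + wr s) / 2 * Real.cos (θ s)) volume a b := by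
    refine dd_ii (by fun_prop) (C := w) (fun t => ?_)
    exact (dd_v a3 a4 t _ (abs_cos_le_one _)).trans (mul_le_of_le_one_right hw (abs_cos_le_one _))
  have iy : ∀ a b, IntervalIntegrable (fun s => (wl s + wr s) / 2 * Real.sin (θ s)) volume a b := by
    refine dd_ii (by fun_prop) (C := w) (fun t => ?_)
    exact (dd_v a3 a4 t _ (abs_sin_le_one _)).trans (mul_le_of_le_one_right hw (abs_sin_le_one _))
  have hx : x1 - x0 = ∫ s in (0:ℝ)..T, (wl s + wr s) / 2 * Real.cos (θ s) := by
    rw [← b4, a5, b1]; ring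
  have hy : y1 - y0 = ∫ s in (0:ℝ)..T, (wl s + wr s) / 2 * Real.sin (θ s) := by
    rw [← b5, a6, b2]; ring
  have hθ : ∀ s, 0 ≤ s → s ≤ T → |θ s - θ0| ≤ w * T / ρ := by
    intro s hs hsT
    have : θ s - θ0 = ∫ s in (0:ℝ)..s, (wr s - wl s) / (2 * ρ) := by rw [a7, b3]; ring
    rw [this]
    have := intervalIntegral.norm_integral_le_of_norm_le_const (a := 0) (b := s) (C := w / ρ)
      (f := fun s => (wr s - wl s) / (2 * ρ)) (fun t _ => by
        rw [Real.norm_eq_abs, abs_div, abs_of_pos (by positivity : 0 < 2 * ρ),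
          div_le_div_iff₀ (by positivity) hρ]
        have := (abs_sub (wr t) (wl t)).trans (add_le_add (a4 t) (a3 t))
        nlinarith)
    rw [Real.norm_eq_abs, sub_zero, abs_of_nonneg hs] at this
    refine this.trans ?_
    rw [div_mul_eq_mul_div]
    gcongr
  rw [hx, hy, ← intervalIntegral.integral_const_mul, ← intervalIntegral.integral_const_mul,
    ← intervalIntegral.integral_const_mul, ← intervalIntegral.integral_const_mul,
    ← intervalIntegral.integral_add ((ix _ _).const_mul _) ((iy _ _).const_mul _),
    ← intervalIntegral.integral_add ((ix _ _).const_mul _) ((iy _ _).const_mul _)]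
  rw [← Real.norm_eq_abs, ← Real.norm_eq_abs]
  constructor
  · refine (intervalIntegral.norm_integral_le_of_norm_le_const (C := w) fun t _ => ?_).trans
      (le_of_eq (by rw [sub_zero, abs_of_nonneg hT]))
    have : cos θ0 * ((wl t + wr t) / 2 * cos (θ t)) + sin θ0 * ((wl t + wr t) / 2 * sin (θ t))
      = (wl t + wr t) / 2 * cos (θ t - θ0) := by rw [cos_sub]; ring
    rw [this, Real.norm_eq_abs]
    exact (dd_v a3 a4 t _ (abs_cos_le_one _)).trans (mul_le_of_le_one_right hw (abs_cos_le_one _))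
  · refine (intervalIntegral.norm_integral_le_of_norm_le_const (C := w * (w * T / ρ))
      fun t ht => ?_).trans (le_of_eq (by rw [sub_zero, abs_of_nonneg hT]; ring))
    rw [Set.uIoc_of_le hT] at ht
    have : -sin θ0 * ((wl t + wr t) / 2 * cos (θ t)) + cos θ0 * ((wl t + wr t) / 2 * sin (θ t))
      = (wl t + wr t) / 2 * sin (θ t - θ0) := by rw [sin_sub]; ring
    rw [this, Real.norm_eq_abs]
    refine (dd_v a3 a4 t _ (abs_sin_le_one _)).trans ?_
    gcongr
    exact (Real.abs_sin_le_abs).trans (hθ t ht.1.le ht.2)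

lemma dd_pi_vol (c1 c2 d1 d2 : ℝ) (h1 : c1 ≤ d1) :
    volume {v : Fin 2 → ℝ | v 0 ∈ Set.Icc c1 d1 ∧ v 1 ∈ Set.Icc c2 d2} =
      ENNReal.ofReal ((d1 - c1) * (d2 - c2)) := by
  have : {v : Fin 2 → ℝ | v 0 ∈ Set.Icc c1 d1 ∧ v 1 ∈ Set.Icc c2 d2} =
      Set.Icc ![c1, c2] ![d1, d2] := by
    ext v
    simp [Pi.le_def, Fin.forall_fin_two]
    tauto
  rw [this, Real.volume_Icc_pi, Fin.prod_univ_two]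
  simp only [Matrix.cons_val_zero, Matrix.cons_val_one]
  rw [ENNReal.ofReal_mul (by linarith)]

lemma dd_rot_vol (θ c1 c2 d1 d2 : ℝ) (h1 : c1 ≤ d1) :
    volume {q : Plane | cos θ * q 0 + sin θ * q 1 ∈ Set.Icc c1 d1 ∧
      -sin θ * q 0 + cos θ * q 1 ∈ Set.Icc c2 d2} =
      ENNReal.ofReal ((d1 - c1) * (d2 - c2)) := by
  let M : Matrix (Fin 2) (Fin 2) ℝ := !![cos θ, sin θ; -sin θ, cos θ]
  have hdet : LinearMap.det (Matrix.toLin' M) = 1 := by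
    rw [LinearMap.det_toLin']
    simp only [M, Matrix.det_fin_two_of]
    linear_combination cos_sq_add_sin_sq θ
  set S := {v : Fin 2 → ℝ | v 0 ∈ Set.Icc c1 d1 ∧ v 1 ∈ Set.Icc c2 d2} with hS
  have hSm : MeasurableSet S := by
    refine MeasurableSet.inter ?_ ?_
    · exact measurableSet_Icc.preimage (measurable_pi_apply 0)
    · exact measurableSet_Icc.preimage (measurable_pi_apply 1)
  have e : {q : Plane | cos θ * q 0 + sin θ * q 1 ∈ Set.Icc c1 d1 ∧
      -sin θ * q 0 + cos θ * q 1 ∈ Set.Icc c2 d2} =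
      (@WithLp.ofLp 2 (Fin 2 → ℝ)) ⁻¹' ((Matrix.toLin' M) ⁻¹' S) := by
    ext q
    simp [S, M, Matrix.mulVec, dotProduct, Fin.sum_univ_two]
  rw [e, (PiLp.volume_preserving_ofLp (Fin 2)).measure_preimage,
    Measure.addHaar_preimage_linearMap _ (by rw [hdet]; norm_num), hdet, dd_pi_vol _ _ _ _ h1]
  · simp
  · exact (hSm.preimage
      (Matrix.toLin' M).continuous_of_finiteDimensional.measurable).nullMeasurableSet

lemma dd_sq_vol (b1 b2 a : ℝ) (ha : 0 ≤ a) :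
    volume {q : Plane | q 0 ∈ Set.Icc b1 (b1 + a) ∧ q 1 ∈ Set.Icc b2 (b2 + a)} =
      ENNReal.ofReal (a ^ 2) := by
  have := dd_rot_vol 0 b1 b2 (b1 + a) (b2 + a) (by linarith)
  simp only [cos_zero, sin_zero, one_mul, zero_mul, add_zero, neg_zero, zero_add] at this
  rw [this]
  congr 1
  ring

lemma dd_reach_vol {w ρ : ℝ} (hw : 0 < w) (hρ : 0 < ρ) (p : Plane) (θ0 t : ℝ) (ht : 0 ≤ t) :
    volume {q : Plane | tauDD w ρ p θ0 q < t} ≤ ENNReal.ofReal (4 * (w * t) ^ 3 / ρ) := by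
  set X := cos θ0 * p 0 + sin θ0 * p 1 with hX
  set Y := -sin θ0 * p 0 + cos θ0 * p 1 with hY
  have hwt : 0 ≤ w * t := by positivity
  have := dd_rot_vol θ0 (X - w * t) (Y - (w * t) ^ 2 / ρ) (X + w * t) (Y + (w * t) ^ 2 / ρ)
    (by linarith)
  have e : 4 * (w * t) ^ 3 / ρ = (X + w * t - (X - w * t)) *
      (Y + (w * t) ^ 2 / ρ - (Y - (w * t) ^ 2 / ρ)) := by ring
  rw [e, ← this]
  refine measure_mono fun q hq => ?_
  obtain ⟨T, θ1, hT, h⟩ := tauDD_exists hw hρ p θ0 q hq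
  obtain ⟨k1, k2⟩ := dd_box hρ h
  have hT0 : 0 ≤ T := h.1
  have l1 : w * T ≤ w * t := by gcongr
  have l2 : (w * T) ^ 2 / ρ ≤ (w * t) ^ 2 / ρ := by gcongr
  have k1' := abs_le.1 (k1.trans l1)
  have k2' := abs_le.1 (k2.trans l2)
  simp only [Set.mem_ofPred_eq, Set.mem_Icc]
  refine ⟨⟨?_, ?_⟩, ⟨?_, ?_⟩⟩ <;> linarith [k1'.1, k1'.2, k2'.1, k2'.2]

lemma dd_integrable {w ρ : ℝ} (hw : 0 < w) (hρ : 0 < ρ) {m : ℕ} (hm : 0 < m)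
    (g : Fin m → Plane × ℝ) (Q : Set Plane) (hQ : IsCompact Q) :
    IntegrableOn (fun q => ⨅ i, tauDD w ρ (g i).1 (g i).2 q) Q := by
  have hc := fun i => tauDD_continuous hw hρ (g i).1 (g i).2
  have h0 : IntegrableOn (tauDD w ρ (g ⟨0, hm⟩).1 (g ⟨0, hm⟩).2) Q :=
    (hc ⟨0, hm⟩).continuousOn.integrableOn_compact hQ
  refine Integrable.mono h0 ?_ ?_
  · exact (Measurable.iInf fun i => (hc i).measurable).aestronglyMeasurable
  · refine Filter.Eventually.of_forall fun q => ?_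
    rw [Real.norm_eq_abs, Real.norm_eq_abs, abs_of_nonneg (Real.iInf_nonneg fun i =>
      tauDD_nonneg _ _ _ _ _), abs_of_nonneg (tauDD_nonneg _ _ _ _ _)]
    exact ciInf_le ⟨0, by rintro _ ⟨i, rfl⟩; exact tauDD_nonneg _ _ _ _ _⟩ _

lemma dd_lower {w ρ a : ℝ} (hw : 0 < w) (hρ : 0 < ρ) (ha : 0 < a) (b1 b2 : ℝ) {m : ℕ}
    (hm : 0 < m) (g : Fin m → Plane × ℝ) (Q : Set Plane)
    (hQ : Q = {q | q 0 ∈ Set.Icc b1 (b1 + a) ∧ q 1 ∈ Set.Icc b2 (b2 + a)}) (hQc : IsCompact Q)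
    (t : ℝ) (ht : 0 ≤ t) :
    t * (a ^ 2 - m * (4 * (w * t) ^ 3 / ρ)) ≤ ∫ q in Q, ⨅ i, tauDD w ρ (g i).1 (g i).2 q := by
  set f : Plane → ℝ := fun q => ⨅ i, tauDD w ρ (g i).1 (g i).2 q with hf
  have hint : Integrable f (volume.restrict Q) := dd_integrable hw hρ hm g Q hQc
  have hnn : ∀ q, 0 ≤ f q := fun q => Real.iInf_nonneg fun i => tauDD_nonneg _ _ _ _ _
  refine le_trans ?_ (mul_meas_ge_le_integral_of_nonneg (Filter.Eventually.of_forall hnn) hint t)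
  gcongr
  have hfin : volume Q ≠ ⊤ := hQc.measure_lt_top.ne
  have : IsFiniteMeasure (volume.restrict Q) := ⟨by simpa using hQc.measure_lt_top⟩
  have hsub : (Set.univ : Set Plane) ⊆ {q | t ≤ f q} ∪
      ⋃ i : Fin m, {q | tauDD w ρ (g i).1 (g i).2 q < t} := by
    intro q _
    by_cases h : t ≤ f q
    · exact Or.inl h
    · right
      have : Nonempty (Fin m) := ⟨⟨0, hm⟩⟩
      obtain ⟨i, hi⟩ := exists_lt_of_ciInf_lt (not_le.1 h)
      exact Set.mem_iUnion.2 ⟨i, hi⟩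
  have hV : volume.real Q = a ^ 2 := by
    rw [Measure.real, hQ, dd_sq_vol _ _ _ ha.le, ENNReal.toReal_ofReal (by positivity)]
  have e1 : (volume.restrict Q).real Set.univ = a ^ 2 := by
    rw [Measure.real, Measure.restrict_apply_univ]; exact hV
  have e2 : ∀ i, (volume.restrict Q).real {q | tauDD w ρ (g i).1 (g i).2 q < t} ≤
      4 * (w * t) ^ 3 / ρ := by
    intro i
    refine ENNReal.toReal_le_of_le_ofReal (by positivity) ?_
    exact (Measure.restrict_apply_le _ _).trans (dd_reach_vol hw hρ _ _ t ht)
  have e3 : (volume.restrict Q).real (⋃ i : Fin m, {q | tauDD w ρ (g i).1 (g i).2 q < t}) ≤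
      m * (4 * (w * t) ^ 3 / ρ) := by
    refine (measureReal_iUnion_fintype_le _).trans ?_
    refine (Finset.sum_le_sum fun i _ => e2 i).trans ?_
    simp
  have e4 := (measureReal_mono hsub (μ := volume.restrict Q)).trans (measureReal_union_le _ _)
  rw [e1] at e4
  linarith

lemma dd_grid (a u : ℝ) (ha : 0 < a) (hu : 0 ≤ u) (hua : u ≤ a) (k : ℕ) (hk : 0 < k) :
    ∃ j : ℕ, j < k ∧ |u - a * j / k| ≤ a / k := by
  have hk' : (0:ℝ) < k := by exact_mod_cast hk
  have hk1 : (1:ℝ) ≤ k := by exact_mod_cast hk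
  set v := u * k / a with hv
  have hv0 : 0 ≤ v := by positivity
  have huv : u = a * v / k := by rw [hv]; field_simp
  have hvk : v ≤ k := by
    rw [hv, div_le_iff₀ ha]; nlinarith
  have main : ∀ j : ℕ, |v - j| ≤ 1 → |u - a * j / k| ≤ a / k := by
    intro j hj
    have : u - a * j / k = (a / k) * (v - j) := by rw [huv]; ring
    rw [this, abs_mul, abs_of_pos (by positivity)]
    exact mul_le_of_le_one_right (by positivity) hj
  by_cases h : v < k
  · refine ⟨⌊v⌋₊, (Nat.floor_lt hv0).2 h, main _ ?_⟩
    have := Nat.floor_le hv0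
    have := Nat.lt_floor_add_one v
    rw [abs_le]; constructor <;> linarith
  · refine ⟨k - 1, by omega, main _ ?_⟩
    have : v = k := le_antisymm hvk (not_lt.1 h)
    rw [this, Nat.cast_sub hk]
    simp

lemma dd_upper {w ρ a : ℝ} (hw : 0 < w) (hρ : 0 < ρ) (ha : 0 < a) (b1 b2 : ℝ) (k : ℕ)
    (hk : 0 < k) : ∃ g : Fin (k ^ 3) → Plane × ℝ,
      ∀ q : Plane, q 0 ∈ Set.Icc b1 (b1 + a) → q 1 ∈ Set.Icc b2 (b2 + a) →
      (⨅ i, tauDD w ρ (g i).1 (g i).2 q) ≤ ((a + (2 + ρ) * √a + a) / w) / k := by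
  have hk1 : (1:ℝ) ≤ k := by exact_mod_cast hk
  have hk' : (0:ℝ) < k := by linarith
  refine ⟨fun i => (!₂[b1 + a * ((i.1 % k : ℕ) : ℝ) / k,
    b2 + a * ((i.1 / k : ℕ) : ℝ) / (k ^ 2 : ℕ)], 0), fun q h0 h1 => ?_⟩
  obtain ⟨j, hj, hjd⟩ := dd_grid a (q 0 - b1) ha (by linarith [h0.1]) (by linarith [h0.2]) k hk
  obtain ⟨l, hl, hld⟩ := dd_grid a (q 1 - b2) ha (by linarith [h1.1]) (by linarith [h1.2])
    (k ^ 2) (by positivity)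
  have hi : j + k * l < k ^ 3 := by
    have : k * (l + 1) ≤ k * k ^ 2 := Nat.mul_le_mul_left k hl
    have e : k * k ^ 2 = k ^ 3 := by ring
    rw [e] at this
    have : k * (l + 1) = k * l + k := by ring
    omega
  refine (ciInf_le ⟨0, by rintro _ ⟨i, rfl⟩; exact tauDD_nonneg _ _ _ _ _⟩ ⟨j + k * l, hi⟩).trans ?_
  have r1 : (j + k * l) % k = j := by simp [Nat.mod_eq_of_lt hj]
  have r2 : (j + k * l) / k = l := by
    rw [Nat.add_mul_div_left _ _ hk, Nat.div_eq_of_lt hj, zero_add]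
  simp only [r1, r2]
  set X := b1 + a * (j : ℝ) / k with hX
  set Y := b2 + a * (l : ℝ) / (k ^ 2 : ℕ) with hY
  obtain ⟨T, θ1, hr, hT⟩ := dd_park hw hρ X Y 0 (q 0 - X) (q 1 - Y)
  have hr' : DDReach w ρ T ((!₂[X, Y] : Plane) 0) ((!₂[X, Y] : Plane) 1) 0 (q 0) (q 1) θ1 := by
    convert hr using 1 <;> simp
  refine (tauDD_le hr').trans (hT.trans ?_)
  have d1 : |q 0 - X| ≤ a / k := by
    have : q 0 - X = q 0 - b1 - a * j / k := by rw [hX]; ring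
    rwa [this]
  have d2 : |q 1 - Y| ≤ a / (k ^ 2 : ℕ) := by
    have : q 1 - Y = q 1 - b2 - a * l / (k ^ 2 : ℕ) := by rw [hY]; ring
    rwa [this]
  push_cast at d2
  have d3 : √|q 1 - Y| ≤ √a / k := by
    refine (Real.sqrt_le_sqrt d2).trans (le_of_eq ?_)
    rw [Real.sqrt_div ha.le, Real.sqrt_sq hk'.le]
  have d4 : a / (k:ℝ) ^ 2 ≤ a / k := by
    gcongr
    nlinarith
  rw [div_right_comm]
  gcongr
  have : (a + (2 + ρ) * √a + a) / k = a / k + (2 + ρ) * (√a / k) + a / k := by ring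
  rw [this]
  gcongr
  exact d2.trans d4

/-- asymptotic lower bound on the optimal light-load coverage cost of `m`
DD robots in a square `Q` of area `A = a²`:
`liminf_{m→∞} m^{1/3} · T_opt^DD(m) ≥ (1/(5 w_max)) (6 ρ A / 5)^{1/3}`. -/
theorem dd_coverage_asymptotic_lower_bound
    (wmax ρ a : ℝ) (hw : 0 < wmax) (hρ : 0 < ρ) (ha : 0 < a) (b₁ b₂ : ℝ) :
    let A : ℝ := a ^ 2
    let Q : Set Plane := {q | q 0 ∈ Set.Icc b₁ (b₁ + a) ∧ q 1 ∈ Set.Icc b₂ (b₂ + a)}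
    let Topt : ℕ → ℝ := fun m =>
      sInf {c : ℝ | ∃ g : Fin m → Plane × ℝ,
        c = (1 / A) * ∫ q in Q, ⨅ i, tauDD wmax ρ (g i).1 (g i).2 q}
    (1 / (5 * wmax)) * (6 * ρ * A / 5) ^ ((1 : ℝ) / 3) ≤
      Filter.liminf (fun m : ℕ => (m : ℝ) ^ ((1 : ℝ) / 3) * Topt m) Filter.atTop := by
  intro A Q Topt
  have hA : 0 < A := by positivity
  have hQc : IsCompact Q := by
    have : Q = (EuclideanSpace.equiv (Fin 2) ℝ).toHomeomorph ⁻¹'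
        (Set.Icc ![b₁, b₂] ![b₁ + a, b₂ + a]) := by
      ext v
      simp [Q, Pi.le_def, Fin.forall_fin_two]
      tauto
    rw [this]
    exact (Homeomorph.isCompact_preimage _).2 isCompact_Icc
  have hnn : ∀ (m : ℕ) (g : Fin m → Plane × ℝ),
      0 ≤ (1 / A) * ∫ q in Q, ⨅ i, tauDD wmax ρ (g i).1 (g i).2 q := by
    intro m g
    have : 0 ≤ ∫ q in Q, ⨅ i, tauDD wmax ρ (g i).1 (g i).2 q :=
      integral_nonneg fun q => Real.iInf_nonneg fun i => tauDD_nonneg _ _ _ _ _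
    positivity
  refine le_liminf_of_le ?_ ?_
  · set C := (a + (2 + ρ) * √a + a) / wmax with hC
    refine IsCoboundedUnder.of_frequently_le (a := C) ?_
    rw [frequently_atTop]
    intro N
    refine ⟨(N + 1) ^ 3, ?_, ?_⟩
    · calc N ≤ N + 1 := Nat.le_succ N
        _ ≤ (N + 1) ^ 3 := Nat.le_self_pow (by norm_num) _
    · set k := N + 1 with hk
      have hk0 : 0 < k := Nat.succ_pos N
      have hk' : (0:ℝ) < k := by exact_mod_cast hk0
      obtain ⟨g, hg⟩ := dd_upper hw hρ ha b₁ b₂ k hk0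
      have h1 : Topt (k ^ 3) ≤ (1 / A) * ∫ q in Q, ⨅ i, tauDD wmax ρ (g i).1 (g i).2 q :=
        csInf_le ⟨0, by rintro _ ⟨g, rfl⟩; exact hnn _ g⟩ ⟨g, rfl⟩
      have h2 : ∫ q in Q, ⨅ i, tauDD wmax ρ (g i).1 (g i).2 q ≤ (C / k) * A := by
        have := norm_setIntegral_le_of_norm_le_const (μ := volume) (s := Q) (C := C / k)
          (f := fun q => ⨅ i, tauDD wmax ρ (g i).1 (g i).2 q) hQc.measure_lt_top
          (fun q hq => by
            rw [Real.norm_eq_abs, abs_of_nonneg (Real.iInf_nonneg fun i =>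
              tauDD_nonneg _ _ _ _ _)]
            exact hg q hq.1 hq.2)
        have hV : volume.real Q = A := by
          rw [Measure.real, dd_sq_vol _ _ _ ha.le, ENNReal.toReal_ofReal (by positivity)]
        rw [hV] at this
        exact (le_abs_self _).trans this
      have h3 : Topt (k ^ 3) ≤ C / k := by
        refine h1.trans ((mul_le_mul_of_nonneg_left h2 (by positivity)).trans (le_of_eq ?_))
        field_simp
      have h4 : ((k ^ 3 : ℕ) : ℝ) ^ ((1:ℝ) / 3) = k := by
        push_cast
        rw [← Real.rpow_natCast, ← Real.rpow_mul hk'.le]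
        norm_num
      rw [h4]
      calc (k:ℝ) * Topt (k ^ 3) ≤ k * (C / k) := by gcongr
        _ = C := by field_simp
  · filter_upwards [eventually_gt_atTop 0] with m hm
    have hm' : (0:ℝ) < m := by exact_mod_cast hm
    set r := (ρ * A / m) ^ ((1:ℝ) / 3) with hr
    have hr0 : 0 ≤ r := by positivity
    have hr3 : r ^ 3 = ρ * A / m := by
      rw [hr, ← Real.rpow_natCast, ← Real.rpow_mul (by positivity)]
      norm_num
    have hT : r / (4 * wmax) ≤ Topt m := by
      refine le_csInf ⟨_, fun _ => (0, 0), rfl⟩ ?_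
      rintro _ ⟨g, rfl⟩
      have := dd_lower hw hρ ha b₁ b₂ hm g Q rfl hQc (r / (2 * wmax)) (by positivity)
      have e : r / (2 * wmax) * (a ^ 2 - m * (4 * (wmax * (r / (2 * wmax))) ^ 3 / ρ))
          = r / (4 * wmax) * A := by
        have : (wmax * (r / (2 * wmax))) ^ 3 = ρ * A / m / 8 := by
          rw [← hr3]; field_simp; norm_num
        rw [this]
        change r / (2 * wmax) * (A - m * (4 * (ρ * A / m / 8) / ρ)) = _
        field_simp
        ring
      rw [e] at this
      rw [one_div, inv_mul_eq_div, le_div_iff₀ hA]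
      exact this
    have hmr : (m:ℝ) ^ ((1:ℝ) / 3) * r = (ρ * A) ^ ((1:ℝ) / 3) := by
      rw [hr, ← Real.mul_rpow hm'.le (by positivity)]
      congr 1
      field_simp
    have h65 : ((6:ℝ) / 5) ^ ((1:ℝ) / 3) ≤ 5 / 4 := by
      rw [one_div]
      refine (Real.rpow_inv_le_iff_of_pos (by norm_num) (by norm_num) (by norm_num)).2 ?_
      norm_num
    have e1 : (6 * ρ * A / 5) ^ ((1:ℝ) / 3) = (6 / 5) ^ ((1:ℝ) / 3) * (ρ * A) ^ ((1:ℝ) / 3) := by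
      rw [← Real.mul_rpow (by norm_num) (by positivity)]
      congr 1
      ring
    calc 1 / (5 * wmax) * (6 * ρ * A / 5) ^ ((1:ℝ) / 3)
        ≤ 1 / (5 * wmax) * (5 / 4 * (ρ * A) ^ ((1:ℝ) / 3)) := by
          rw [e1]; gcongr
      _ = (m:ℝ) ^ ((1:ℝ) / 3) * (r / (4 * wmax)) := by
          rw [← hmr]; field_simp
      _ ≤ (m:ℝ) ^ ((1:ℝ) / 3) * Topt m := by gcongr
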